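/- Let h ≥ 2, let V be a set of size 3h−1, let K be a family of h-element subsets of V, and let H be the hypergraph on V whose edges are the sets V \ B where B ranges over the h-element subsets of V not in K. Let X ⊆ V with |X| ≥ 2h+1, and let R ⊆ X be an h-element set with R ∈ K. Then the coloring of X in which R is red and X \ R is blue has no monochromatic trace edge of size at least h: there is no edge e of H with e ∩ X ⊆ R and |e ∩ X| ≥ h, and no edge e of H with e ∩ X ⊆ X \ R and |e ∩ X| ≥ h. -/

import Mathlib

/-- The edges of the hypergraph `H`: complements `V \ B` of the `h`-element
subsets `B` of `V` that do not belong to `K`. -/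
def complEdges {α : Type*} [DecidableEq α]
    (V : Finset α) (h : ℕ) (K : Finset (Finset α)) : Finset (Finset α) :=
  (V.powersetCard h \ K).image (fun B => V \ B)

section Trace

variable {α : Type*} [DecidableEq α] {h : ℕ} {V X R e : Finset α} {K : Finset (Finset α)}

theorem mem_complEdges :
    e ∈ complEdges V h K ↔ ∃ B ⊆ V, B.card = h ∧ B ∉ K ∧ V \ B = e := by
  simp only [complEdges, Finset.mem_image, Finset.mem_sdiff, Finset.mem_powersetCard, and_assoc]

theorem exists_inter_eq_sdiff_of_mem_complEdges (he : e ∈ complEdges V h K) (hX : X ⊆ V) :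
    ∃ B, B.card = h ∧ B ∉ K ∧ e ∩ X = X \ B := by
  obtain ⟨B, -, hBcard, hBK, rfl⟩ := mem_complEdges.mp he
  exact ⟨B, hBcard, hBK, by rw [Finset.sdiff_inter_right_comm, Finset.inter_eq_right.mpr hX]⟩

theorem not_inter_subset_of_card_add_lt (he : e ∈ complEdges V h K) (hX : X ⊆ V)
    (hcard : R.card + h < X.card) : ¬ e ∩ X ⊆ R := by
  obtain ⟨B, hBcard, -, htrace⟩ := exists_inter_eq_sdiff_of_mem_complEdges he hX
  rw [htrace]
  intro hsub
  have hle : X.card - B.card ≤ R.card :=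
    (Finset.le_card_sdiff B X).trans (Finset.card_le_card hsub)
  omega

theorem not_inter_subset_sdiff_of_mem (he : e ∈ complEdges V h K) (hX : X ⊆ V)
    (hR : R ⊆ X) (hRcard : h ≤ R.card) (hRK : R ∈ K) : ¬ e ∩ X ⊆ X \ R := by
  obtain ⟨B, hBcard, hBK, htrace⟩ := exists_inter_eq_sdiff_of_mem_complEdges he hX
  rw [htrace]
  intro hsub
  have hRB : R ⊆ B := by
    rw [← Finset.sdiff_sdiff_eq_self hR]
    exact sdiff_le_comm.mp hsub
  have hRB_eq : R = B := Finset.eq_of_subset_of_card_le hRB (hBcard.trans_le hRcard)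
  exact hBK (hRB_eq ▸ hRK)

theorem stmt_8_general (hX : X ⊆ V) (hXcard : 2 * h < X.card)
    (hR : R ⊆ X) (hRcard : R.card = h) (hRK : R ∈ K) :
    ∀ e ∈ complEdges V h K, ¬ e ∩ X ⊆ R ∧ ¬ e ∩ X ⊆ X \ R := fun _ he =>
  ⟨not_inter_subset_of_card_add_lt he hX (by omega),
    not_inter_subset_sdiff_of_mem he hX hR hRcard.ge hRK⟩

end Trace

theorem stmt_8 {α : Type*} [DecidableEq α] (h : ℕ) (hh : 2 ≤ h)
    (V : Finset α) (hV : V.card = 3 * h - 1)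
    (K : Finset (Finset α)) (hKsub : K ⊆ V.powersetCard h)
    (X : Finset α) (hX : X ⊆ V) (hXcard : 2 * h + 1 ≤ X.card)
    (R : Finset α) (hR : R ⊆ X) (hRcard : R.card = h) (hRK : R ∈ K) :
    (¬ ∃ e ∈ complEdges V h K, e ∩ X ⊆ R ∧ h ≤ (e ∩ X).card) ∧
    (¬ ∃ e ∈ complEdges V h K, e ∩ X ⊆ X \ R ∧ h ≤ (e ∩ X).card) := by
  have hmono := stmt_8_general hX hXcard hR hRcard hRK
  exact ⟨fun ⟨e, he, hred, _⟩ => (hmono e he).1 hred, fun ⟨e, he, hblue, _⟩ => (hmono e he).2 hblue⟩
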